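/- Let (F_p)_{p∈P} be a family of C^r-skew-products satisfying assumption (U), fix p₀ in the closure of P, and let Δ(p₀) be the similarity dimension at p₀. Then the map φ : 𝒜^ℤ → ℝ defined by φ(A) := Δ(p₀)·log λ_{p₀,𝔞,α_{-1}}(π_{p₀,α_{-1}𝔞}(σ(α))), where A = α𝔞 is the concatenation of α ∈ 𝒜^{ℤ₋*} and 𝔞 ∈ 𝒜^ℕ and σ(α) denotes the backward sequence obtained from α by deleting its last letter α_{-1}, is Hölder continuous with positive exponent with respect to the metric d∞ on 𝒜^ℤ. -/

import Mathlib

open Filter MeasureTheory Set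
open scoped Topology ENNReal NNReal

noncomputable section

namespace Paper

abbrev E (n : ℕ) : Type := EuclideanSpace ℝ (Fin n)

def cube (N : ℕ) : Set (E N) := {x | ∀ i, x i ∈ Icc (-1:ℝ) 1}

def cubeO (d : ℕ) : Set (E d) := {p | ∀ i, p i ∈ Ioo (-1:ℝ) 1}

variable {A : Type}

def consF (a : A) (𝔞 : ℕ → A) : ℕ → A := fun n =>
  match n with
  | 0 => a
  | Nat.succ k => 𝔞 k

def app : List A → (ℕ → A) → ℕ → A
  | [], 𝔞 => 𝔞
  | a :: w, 𝔞 => app w (consF a 𝔞)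

def trunc (α : ℕ → A) (n : ℕ) : List A := List.ofFn fun i : Fin n => α i

def cyl (w : List A) : Set (ℕ → A) := {α | ∀ i : Fin w.length, α i = w.get i}

variable {N d : ℕ}

def psi (f : E d → (ℕ → A) → E N → E N) (p : E d) : List A → (ℕ → A) → E N → E N
  | [], _ => id
  | a :: w, 𝔞 => f p (consF a 𝔞) ∘ psi f p w (consF a 𝔞)

def dentry (g : E N → E N) (x : E N) (i j : Fin N) : ℝ :=
  fderiv ℝ g x (EuclideanSpace.single j (1:ℝ)) i

def lam (hN : 0 < N) (f : E d → (ℕ → A) → E N → E N) (p : E d) (𝔞 : ℕ → A)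
    (w : List A) (x : E N) : ℝ :=
  |dentry (psi f p w 𝔞) x ⟨0, hN⟩ ⟨0, hN⟩|

def Lam (hN : 0 < N) (f : E d → (ℕ → A) → E N → E N) (p : E d) (𝔞 : ℕ → A)
    (w : List A) : ℝ :=
  sSup ((fun x => lam hN f p 𝔞 w x) '' cube N)

def piProj (f : E d → (ℕ → A) → E N → E N) (p : E d) (𝔞 α : ℕ → A) : E N :=
  limUnder atTop fun n => psi f p (trunc α n) 𝔞 0

def Mop (g : E N → E N) : ℝ := sSup ((fun x => ‖fderiv ℝ g x‖) '' cube N)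

def pressure [Fintype A] (f : E d → (ℕ → A) → E N → E N) (p : E d) (𝔞 : ℕ → A) (s : ℝ) : ℝ :=
  limUnder atTop fun n : ℕ =>
    (1 / n : ℝ) * Real.log (∑ w : Fin n → A, Mop (psi f p (List.ofFn w) 𝔞) ^ s)

structure SkewFamily (A : Type) (N d : ℕ) (r : ℕ∞) where
  f : E d → (ℕ → A) → E N → E N
  X' : Set (E N)
  P' : Set (E d)
  X'_open : IsOpen X'
  X_subset : cube N ⊆ X'
  P'_open : IsOpen P'
  P_subset : closure (cubeO d) ⊆ P'
  smooth : ∀ 𝔞 : ℕ → A, ContDiffOn ℝ r (fun q : E d × E N => f q.1 𝔞 q.2) (P' ×ˢ X')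
  inj : ∀ 𝔞 : ℕ → A, ∀ p ∈ P', Set.InjOn (f p 𝔞) X'
  into : ∀ 𝔞 : ℕ → A, ∀ p ∈ P', f p 𝔞 '' X' ⊆ cube N
  holder0 : ∃ C > (0:ℝ), ∃ θ ∈ Set.Ioo (0:ℝ) 1, ∀ p ∈ P', ∀ (𝔞 𝔟 : ℕ → A) (q : ℕ),
      (∀ i < q, 𝔞 i = 𝔟 i) → ∀ x ∈ X', ‖f p 𝔞 x - f p 𝔟 x‖ ≤ C * θ ^ q
  holder1 : ∃ C > (0:ℝ), ∃ θ ∈ Set.Ioo (0:ℝ) 1, ∀ p ∈ P', ∀ (𝔞 𝔟 : ℕ → A) (q : ℕ),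
      (∀ i < q, 𝔞 i = 𝔟 i) → ∀ x ∈ X',
      ‖fderiv ℝ (f p 𝔞) x - fderiv ℝ (f p 𝔟) x‖ ≤ C * θ ^ q
  cont2 : ∀ p ∈ P', ∀ 𝔞 : ℕ → A, ∀ ε > (0:ℝ), ∃ q : ℕ, ∀ 𝔟 : ℕ → A,
      (∀ i < q, 𝔞 i = 𝔟 i) → ∀ x ∈ X',
      ‖iteratedFDeriv ℝ 2 (f p 𝔞) x - iteratedFDeriv ℝ 2 (f p 𝔟) x‖ ≤ ε

def UnipOn (hN : 0 < N) (f : E d → (ℕ → A) → E N → E N)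
    (P' : Set (E d)) (X' : Set (E N)) : Prop :=
  ∀ p ∈ P', ∀ 𝔞 : ℕ → A, ∀ x ∈ X',
    (∀ i j : Fin N, (i : ℕ) < (j : ℕ) → dentry (f p 𝔞) x i j = 0) ∧
    (∀ i j : Fin N, dentry (f p 𝔞) x i i = dentry (f p 𝔞) x j j) ∧
    0 < |dentry (f p 𝔞) x ⟨0, hN⟩ ⟨0, hN⟩| ∧ |dentry (f p 𝔞) x ⟨0, hN⟩ ⟨0, hN⟩| < 1

def GammaBounds (hN : 0 < N) (f : E d → (ℕ → A) → E N → E N) (γ' γ : ℝ) : Prop :=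
  0 < γ' ∧ γ' < γ ∧ γ < 1 ∧
  ∀ p ∈ closure (cubeO d), ∀ (𝔞 : ℕ → A) (a : A), ∀ x ∈ cube N,
    γ' < lam hN f p 𝔞 [a] x ∧ lam hN f p 𝔞 [a] x < γ

structure ParamPerturb {A : Type} {N d : ℕ} {r : ℕ∞} (hN : 0 < N)
    (S : SkewFamily A N d r) (θ : ℝ) (τ : ℕ) where
  g : E τ → E d → (ℕ → A) → E N → E N
  jointSmooth : ∀ 𝔞 : ℕ → A, ContDiffOn ℝ r
      (fun q : E τ × E d × E N => g q.1 q.2.1 𝔞 q.2.2) ((cubeO τ) ×ˢ S.P' ×ˢ S.X')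
  smooth : ∀ t ∈ cubeO τ, ∀ 𝔞 : ℕ → A, ContDiffOn ℝ r
      (fun q : E d × E N => g t q.1 𝔞 q.2) (S.P' ×ˢ S.X')
  inj : ∀ t ∈ cubeO τ, ∀ 𝔞 : ℕ → A, ∀ p ∈ S.P', Set.InjOn (g t p 𝔞) S.X'
  into : ∀ t ∈ cubeO τ, ∀ 𝔞 : ℕ → A, ∀ p ∈ S.P', g t p 𝔞 '' S.X' ⊆ cube N
  close : ∃ θ' < θ, ∀ t ∈ cubeO τ, ∀ (𝔞 : ℕ → A) (k : ℕ), (k : ℕ∞) ≤ r →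
      ∀ p ∈ S.P', ∀ x ∈ S.X',
      ‖iteratedFDeriv ℝ k (fun q : E d × E N => S.f q.1 𝔞 q.2 - g t q.1 𝔞 q.2) (p, x)‖ ≤ θ'
  unip : ∀ t ∈ cubeO τ, UnipOn hN (g t) S.P' S.X'

def TransAssumption {A : Type} {N d : ℕ} {r : ℕ∞} (hN : 0 < N)
    (S : SkewFamily A N d r) : Prop :=
  ∃ C > (0:ℝ),
    (∀ 𝔞 α β : ℕ → A, α 0 ≠ β 0 → ∀ rr > (0:ℝ),
      volume {p ∈ cubeO d | ‖piProj S.f p 𝔞 α - piProj S.f p 𝔞 β‖ < rr}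
        ≤ ENNReal.ofReal (C * rr ^ N)) ∧
    ∃ θ₀ > (0:ℝ), ∀ θ : ℝ, 0 < θ → θ ≤ θ₀ → ∀ τ : ℕ, 0 < τ →
      ∀ Ft : ParamPerturb hN S θ τ, ∀ t ∈ cubeO τ,
      ∀ 𝔞 α β : ℕ → A, α 0 ≠ β 0 → ∀ rr > (0:ℝ),
        volume {p ∈ cubeO d | ‖piProj (Ft.g t) p 𝔞 α - piProj (Ft.g t) p 𝔞 β‖ < rr}
          ≤ ENNReal.ofReal (C * rr ^ N)

def dens {N : ℕ} (ν : Measure (E N)) (x : E N) : ℝ≥0∞ :=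
  liminf (fun rr : ℝ => ν (Metric.ball x rr) / volume (Metric.ball (0 : E N) rr)) (𝓝[>] (0:ℝ))

end Paper

namespace IFS

open Paper

variable {A : Type}

def psiA (c b : ℝ → A → ℝ) (p : ℝ) : List A → ℝ → ℝ
  | [], x => x
  | a :: w, x => c p a * psiA c b p w x + b p a

def piA (c b : ℝ → A → ℝ) (p : ℝ) (α : ℕ → A) : ℝ :=
  limUnder atTop fun n => psiA c b p (Paper.trunc α n) 0

def LamA (c : ℝ → A → ℝ) (p : ℝ) (w : List A) : ℝ := (w.map fun a => |c p a|).prod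

def IFSHyp (c b : ℝ → A → ℝ) (U : Set ℝ) : Prop :=
  IsOpen U ∧ Icc (-1:ℝ) 1 ⊆ U ∧
  (∀ a : A, ContinuousOn (fun p => c p a) U) ∧
  (∀ a : A, ContinuousOn (fun p => b p a) U) ∧
  (∀ p ∈ U, ∀ a : A, ∀ x ∈ Icc (-1:ℝ) 1, c p a * x + b p a ∈ Ioo (-1:ℝ) 1)

def GammaBoundsA (c : ℝ → A → ℝ) (γ' γ : ℝ) : Prop :=
  0 < γ' ∧ γ' < γ ∧ γ < 1 ∧ ∀ p ∈ Icc (-1:ℝ) 1, ∀ a : A, γ' < |c p a| ∧ |c p a| < γ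

def TransAff (c b : ℝ → A → ℝ) : Prop :=
  ∃ C > (0:ℝ), ∀ α β : ℕ → A, α 0 ≠ β 0 → ∀ rr > (0:ℝ),
    volume {p ∈ Ioo (-1:ℝ) 1 | |piA c b p α - piA c b p β| < rr} ≤ ENNReal.ofReal (C * rr)

def densR (ν : MeasureTheory.Measure ℝ) (x : ℝ) : ℝ≥0∞ :=
  liminf (fun rr : ℝ => ν (Ioo (x - rr) (x + rr)) / ENNReal.ofReal (2 * rr)) (𝓝[>] (0:ℝ))

end IFS

namespace Paper

/-!
The eigenvalue at `(𝔞, α)` is an entry of `Df_𝔞` at the point `π_𝔞(α)`, so its logarithm is a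
Lipschitz function of that differential, and everything reduces to the Hölder dependence of
`π_𝔞(α)` on `(𝔞, α)`. A lower triangular matrix with small diagonal need not contract the Euclidean
norm, but it contracts the norm `max_i ε ^ i |x_i|` for small `ε`, since conjugating by the weights
multiplies every entry below the diagonal by a positive power of `ε`. Hence the compositions `ψ^α`
contract exponentially: digits of `α` far in the past move `π_𝔞(α)` by a geometrically small
amount, and perturbing the base point `𝔞` makes a geometric series of small errors.
-/

section Cube

variable {N : ℕ}

theorem cube_eq_preimage_pi :
    cube N = EuclideanSpace.equiv (Fin N) ℝ ⁻¹' univ.pi fun _ => Icc (-1 : ℝ) 1 := by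
  ext x
  simp only [cube, mem_ofPred_eq, mem_preimage, mem_univ_pi]
  rfl

theorem convex_cube : Convex ℝ (cube N) := by
  rw [cube_eq_preimage_pi]
  exact (convex_pi fun _ _ => convex_Icc _ _).linear_preimage
    (EuclideanSpace.equiv (Fin N) ℝ : E N →ₗ[ℝ] Fin N → ℝ)

theorem isCompact_cube : IsCompact (cube N) := by
  rw [cube_eq_preimage_pi]
  exact (EuclideanSpace.equiv (Fin N) ℝ).toHomeomorph.isCompact_preimage.2
    (isCompact_univ_pi fun _ => isCompact_Icc)

theorem zero_mem_cube : (0 : E N) ∈ cube N := fun _ => by simp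

end Cube

section AdaptedNorm

variable {N : ℕ}

/-- The coordinates `x_i` rescaled by `ε ^ i`. In the sup norm of these coordinates, a lower
triangular matrix is for small `ε` nearly as contracting as its diagonal. -/
def weightedCoords (N : ℕ) (ε : ℝˣ) : E N ≃L[ℝ] (Fin N → ℝ) :=
  (EuclideanSpace.equiv (Fin N) ℝ).trans
    (ContinuousLinearEquiv.piCongrRight fun i => ContinuousLinearEquiv.smulLeft (ε ^ (i : ℕ)))

theorem weightedCoords_apply (ε : ℝˣ) (x : E N) (i : Fin N) :
    weightedCoords N ε x i = (ε : ℝ) ^ (i : ℕ) * x i := by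
  rw [← Units.val_pow_eq_pow_val]
  rfl

theorem abs_apply_single_le {m n : ℕ} (L : E n →L[ℝ] E m) (i : Fin m) (j : Fin n) :
    |L (EuclideanSpace.single j 1) i| ≤ ‖L‖ := by
  rw [← Real.norm_eq_abs]
  exact (PiLp.norm_apply_le _ i).trans (by simpa using L.le_opNorm (EuclideanSpace.single j 1))

theorem apply_eq_sum_single {m n : ℕ} (L : E n →L[ℝ] E m) (v : E n) (i : Fin m) :
    L v i = ∑ j, L (EuclideanSpace.single j 1) i * v j := by
  have hv : v = ∑ j, v j • (EuclideanSpace.single j (1 : ℝ) : E n) := by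
    ext k
    simp [Pi.single_apply]
  conv_lhs => rw [hv]
  simp [mul_comm]

theorem pow_mul_abs_lowerTriangular_le {B : Fin N → Fin N → ℝ} {ε γ K : ℝ} (hε : 0 < ε)
    (hε1 : ε ≤ 1) (hK : ∀ i j, |B i j| ≤ K) (hlow : ∀ i j, i < j → B i j = 0)
    (hdiag : ∀ i, |B i i| ≤ γ) (i j : Fin N) :
    ε ^ (i : ℕ) * |B i j| ≤ ((if i = j then γ else 0) + K * ε) * ε ^ (j : ℕ) := by
  have hK0 : 0 ≤ K := (abs_nonneg _).trans (hK i j)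
  rcases lt_trichotomy i j with hij | rfl | hij
  · rw [hlow i j hij, if_neg hij.ne, abs_zero, mul_zero]
    positivity
  · rw [if_pos rfl, mul_comm]
    gcongr
    exact (hdiag i).trans (le_add_of_nonneg_right (by positivity))
  · rw [if_neg hij.ne', zero_add]
    calc ε ^ (i : ℕ) * |B i j| ≤ ε ^ ((j : ℕ) + 1) * K :=
          mul_le_mul (pow_le_pow_of_le_one hε.le hε1 hij) (hK i j) (abs_nonneg _) (by positivity)
      _ = K * ε * ε ^ (j : ℕ) := by ring

theorem norm_weightedCoords_apply_le {L : E N →L[ℝ] E N} {ε : ℝˣ} {γ K : ℝ} (hε : 0 < (ε : ℝ))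
    (hε1 : (ε : ℝ) ≤ 1) (hγ : 0 ≤ γ) (hK : ‖L‖ ≤ K)
    (hlow : ∀ i j : Fin N, i < j → L (EuclideanSpace.single j 1) i = 0)
    (hdiag : ∀ i : Fin N, |L (EuclideanSpace.single i 1) i| ≤ γ) (v : E N) :
    ‖weightedCoords N ε (L v)‖ ≤ (γ + N * (K * ε)) * ‖weightedCoords N ε v‖ := by
  have hK0 : 0 ≤ K := (norm_nonneg L).trans hK
  refine (pi_norm_le_iff_of_nonneg (by positivity)).2 fun i => ?_
  have hentry (j : Fin N) :
      ‖(ε : ℝ) ^ (i : ℕ) * (L (EuclideanSpace.single j 1) i * v j)‖ ≤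
        ((if i = j then γ else 0) + K * ε) * ‖weightedCoords N ε v‖ :=
    calc ‖(ε : ℝ) ^ (i : ℕ) * (L (EuclideanSpace.single j 1) i * v j)‖
        = (ε : ℝ) ^ (i : ℕ) * |L (EuclideanSpace.single j 1) i| * |v j| := by
          rw [Real.norm_eq_abs, abs_mul, abs_mul, abs_of_pos (pow_pos hε _), mul_assoc]
      _ ≤ ((if i = j then γ else 0) + K * ε) * (ε : ℝ) ^ (j : ℕ) * |v j| := by
          have hentryK := fun i j => (abs_apply_single_le L i j).trans hK
          exact mul_le_mul_of_nonneg_right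
            (pow_mul_abs_lowerTriangular_le hε hε1 hentryK hlow hdiag i j) (abs_nonneg _)
      _ = ((if i = j then γ else 0) + K * ε) * ‖weightedCoords N ε v j‖ := by
          rw [weightedCoords_apply, Real.norm_eq_abs, abs_mul, abs_of_pos (pow_pos hε _), mul_assoc]
      _ ≤ ((if i = j then γ else 0) + K * ε) * ‖weightedCoords N ε v‖ :=
          mul_le_mul_of_nonneg_left (norm_le_pi_norm _ j) (by split_ifs <;> positivity)
  calc ‖weightedCoords N ε (L v) i‖
      ≤ ∑ j, ‖(ε : ℝ) ^ (i : ℕ) * (L (EuclideanSpace.single j 1) i * v j)‖ := by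
        rw [weightedCoords_apply, apply_eq_sum_single, Finset.mul_sum]
        exact norm_sum_le _ _
    _ ≤ ∑ j, ((if i = j then γ else 0) + K * ε) * ‖weightedCoords N ε v‖ :=
        Finset.sum_le_sum fun j _ => hentry j
    _ = (γ + N * (K * ε)) * ‖weightedCoords N ε v‖ := by
        rw [← Finset.sum_mul, Finset.sum_add_distrib]
        simp

theorem exists_equiv_norm_apply_le_of_lowerTriangular {γ κ : ℝ} (hγ : 0 ≤ γ) (hγκ : γ < κ)
    (K : ℝ) :
    ∃ T : E N ≃L[ℝ] (Fin N → ℝ), ∀ L : E N →L[ℝ] E N, ‖L‖ ≤ K →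
      (∀ i j : Fin N, i < j → L (EuclideanSpace.single j 1) i = 0) →
      (∀ i : Fin N, |L (EuclideanSpace.single i 1) i| ≤ γ) →
      ∀ v, ‖T (L v)‖ ≤ κ * ‖T v‖ := by
  have hlim : Tendsto (fun ε : ℝ => γ + N * (K * ε)) (𝓝[>] 0) (𝓝 γ) := by
    refine Tendsto.mono_left ?_ nhdsWithin_le_nhds
    exact Continuous.tendsto' (by fun_prop) _ _ (by simp)
  obtain ⟨ε, hεκ, hε, hε1⟩ :=
    ((hlim.eventually_lt_const hγκ).and (Ioc_mem_nhdsGT zero_lt_one)).exists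
  refine ⟨weightedCoords N (Units.mk0 ε hε.ne'), fun L hK hlow hdiag v => ?_⟩
  exact (norm_weightedCoords_apply_le hε hε1 hγ hK hlow hdiag v).trans (by gcongr; exact hεκ.le)

theorem norm_map_sub_le_of_norm_map_fderiv_le {V F : Type*} [NormedAddCommGroup V]
    [NormedSpace ℝ V] [NormedAddCommGroup F] [NormedSpace ℝ F] (T : V →L[ℝ] F) {g : V → V}
    {s : Set V} {κ : ℝ} (hs : Convex ℝ s) (hg : ∀ x ∈ s, DifferentiableAt ℝ g x)
    (hκ : ∀ x ∈ s, ∀ v, ‖T (fderiv ℝ g x v)‖ ≤ κ * ‖T v‖) {x y : V} (hx : x ∈ s) (hy : y ∈ s) :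
    ‖T (g x - g y)‖ ≤ κ * ‖T (x - y)‖ := by
  have hmem : ∀ t ∈ Icc (0 : ℝ) 1, y + t • (x - y) ∈ s := fun t ht =>
    hs.add_smul_sub_mem hy hx ht
  have hderiv : ∀ t ∈ Icc (0 : ℝ) 1, HasDerivWithinAt (fun t : ℝ => T (g (y + t • (x - y))))
      (T (fderiv ℝ g (y + t • (x - y)) (x - y))) (Icc 0 1) t := by
    intro t ht
    have hline : HasDerivAt (fun t : ℝ => y + t • (x - y)) (x - y) t := by
      simpa using ((hasDerivAt_id t).smul_const (x - y)).const_add y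
    have hcomp := (hg _ (hmem t ht)).hasFDerivAt.comp_hasDerivAt t hline
    exact (T.hasFDerivAt.comp_hasDerivAt t hcomp).hasDerivWithinAt
  simpa [map_sub] using norm_image_sub_le_of_norm_deriv_le_segment_01' hderiv
    fun t ht => hκ _ (hmem t (Ico_subset_Icc_self ht)) _

end AdaptedNorm

section Words

variable {A : Type} {N d : ℕ}

theorem consF_zero_tail (𝔞 : ℕ → A) : consF (𝔞 0) (fun i => 𝔞 (i + 1)) = 𝔞 := by
  funext n
  cases n <;> rfl

theorem consF_agree {a : A} {𝔞 𝔟 : ℕ → A} {q : ℕ} (h : ∀ i < q, 𝔞 i = 𝔟 i) :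
    ∀ i < q + 1, consF a 𝔞 i = consF a 𝔟 i := by
  rintro (_ | i) hi
  · rfl
  · exact h i (Nat.lt_of_succ_lt_succ hi)

theorem app_agree {q : ℕ} (w : List A) {𝔞 𝔟 : ℕ → A} (h : ∀ i < q, 𝔞 i = 𝔟 i) :
    ∀ i < q, app w 𝔞 i = app w 𝔟 i := by
  induction w generalizing 𝔞 𝔟 with
  | nil => exact h
  | cons a _ ih => exact ih fun i hi => consF_agree h i (hi.trans (Nat.lt_succ_self q))

theorem trunc_succ (α : ℕ → A) (n : ℕ) : trunc α (n + 1) = trunc α n ++ [α n] :=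
  List.ofFn_succ_last

theorem length_trunc (α : ℕ → A) (n : ℕ) : (trunc α n).length = n :=
  List.length_ofFn

theorem trunc_congr {α β : ℕ → A} {n : ℕ} (h : ∀ i < n, α i = β i) : trunc α n = trunc β n :=
  congrArg List.ofFn (funext fun i => h i i.isLt)

theorem psi_append_singleton (f : E d → (ℕ → A) → E N → E N) (p : E d) (w : List A) (a : A)
    (𝔞 : ℕ → A) (x : E N) :
    psi f p (w ++ [a]) 𝔞 x = psi f p w 𝔞 (f p (consF a (app w 𝔞)) x) := by
  induction w generalizing 𝔞 with
  | nil => rfl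
  | cons b w ih => exact congrArg (f p (consF b 𝔞)) (ih (consF b 𝔞))

theorem psi_mapsTo {f : E d → (ℕ → A) → E N → E N} {p : E d} {s : Set (E N)}
    (hf : ∀ 𝔞, MapsTo (f p 𝔞) s s) (w : List A) (𝔞 : ℕ → A) : MapsTo (psi f p w 𝔞) s s := by
  induction w generalizing 𝔞 with
  | nil => exact mapsTo_id s
  | cons a w ih => exact (hf _).comp (ih _)

theorem norm_map_psi_sub_le {F : Type*} [NormedAddCommGroup F] [NormedSpace ℝ F]
    (T : E N →L[ℝ] F) {f : E d → (ℕ → A) → E N → E N} {p : E d} {s : Set (E N)} {κ : ℝ}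
    (hκ : 0 ≤ κ) (hf : ∀ 𝔞, MapsTo (f p 𝔞) s s)
    (hcontr : ∀ 𝔞, ∀ x ∈ s, ∀ y ∈ s, ‖T (f p 𝔞 x - f p 𝔞 y)‖ ≤ κ * ‖T (x - y)‖)
    (w : List A) (𝔞 : ℕ → A) {x y : E N} (hx : x ∈ s) (hy : y ∈ s) :
    ‖T (psi f p w 𝔞 x - psi f p w 𝔞 y)‖ ≤ κ ^ w.length * ‖T (x - y)‖ := by
  induction w generalizing 𝔞 with
  | nil => simp [psi]
  | cons a w ih =>
    rw [List.length_cons, pow_succ', mul_assoc]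
    exact (hcontr _ _ (psi_mapsTo hf w _ hx) _ (psi_mapsTo hf w _ hy)).trans
      (mul_le_mul_of_nonneg_left (ih _) hκ)

end Words

section SymbolicHolder

variable {A : Type} {Y Z : Type*} [PseudoMetricSpace Y] [PseudoMetricSpace Z]

/-- Hölder continuity in the pair of a forward sequence `𝔞` and a backward sequence `α`, both
indexed by `ℕ`: the distance of two values decays geometrically in the number of digits shared by
both pairs. A rate `θ` is the Hölder exponent `log θ / log D₀` for the metric `D₀ ^ n`. -/
def SymbolicHolder (u : (ℕ → A) → (ℕ → A) → Y) : Prop :=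
  ∃ C > (0 : ℝ), ∃ θ ∈ Ioo (0 : ℝ) 1, ∀ (𝔞 𝔟 α β : ℕ → A) (n : ℕ),
    (∀ i < n, 𝔞 i = 𝔟 i) → (∀ i < n, α i = β i) → dist (u 𝔞 α) (u 𝔟 β) ≤ C * θ ^ n

theorem SymbolicHolder.of_dist_le_add {u : (ℕ → A) → (ℕ → A) → Y} {C₁ C₂ θ₁ θ₂ : ℝ}
    (hθ₁ : θ₁ ∈ Ioo (0 : ℝ) 1) (hθ₂ : θ₂ ∈ Ioo (0 : ℝ) 1)
    (h : ∀ (𝔞 𝔟 α β : ℕ → A) (n : ℕ), (∀ i < n, 𝔞 i = 𝔟 i) → (∀ i < n, α i = β i) →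
      dist (u 𝔞 α) (u 𝔟 β) ≤ C₁ * θ₁ ^ n + C₂ * θ₂ ^ n) :
    SymbolicHolder u := by
  have hθ : 0 < max θ₁ θ₂ := lt_max_of_lt_left hθ₁.1
  refine ⟨|C₁| + |C₂| + 1, by positivity, max θ₁ θ₂, ⟨hθ, max_lt hθ₁.2 hθ₂.2⟩,
    fun 𝔞 𝔟 α β n h𝔞 hα => ?_⟩
  calc dist (u 𝔞 α) (u 𝔟 β) ≤ C₁ * θ₁ ^ n + C₂ * θ₂ ^ n := h 𝔞 𝔟 α β n h𝔞 hα
    _ ≤ |C₁| * max θ₁ θ₂ ^ n + |C₂| * max θ₁ θ₂ ^ n := by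
        have := hθ₁.1.le
        have := hθ₂.1.le
        gcongr
        exacts [le_abs_self _, le_max_left _ _, le_abs_self _, le_max_right _ _]
    _ ≤ (|C₁| + |C₂| + 1) * max θ₁ θ₂ ^ n := by
        rw [← add_mul]
        exact mul_le_mul_of_nonneg_right (le_add_of_nonneg_right zero_le_one) (by positivity)

theorem SymbolicHolder.of_dist_le_mul {u : (ℕ → A) → (ℕ → A) → Y} {v : (ℕ → A) → (ℕ → A) → Z}
    (hu : SymbolicHolder u) {K : ℝ}
    (h : ∀ 𝔞 𝔟 α β, dist (v 𝔞 α) (v 𝔟 β) ≤ K * dist (u 𝔞 α) (u 𝔟 β)) : SymbolicHolder v := by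
  obtain ⟨C, -, θ, hθ, hu⟩ := hu
  refine .of_dist_le_add (C₁ := |K| * C) (C₂ := 0) hθ hθ fun 𝔞 𝔟 α β n h𝔞 hα => ?_
  calc dist (v 𝔞 α) (v 𝔟 β) ≤ K * dist (u 𝔞 α) (u 𝔟 β) := h 𝔞 𝔟 α β
    _ ≤ |K| * (C * θ ^ n) :=
        mul_le_mul (le_abs_self K) (hu 𝔞 𝔟 α β n h𝔞 hα) dist_nonneg (abs_nonneg K)
    _ = |K| * C * θ ^ n + 0 * θ ^ n := by ring

end SymbolicHolder

section Contraction

variable {A : Type} {N d : ℕ} {f : E d → (ℕ → A) → E N → E N} {p : E d} {M κ δ : ℝ} {q : ℕ}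

/-- The fibre maps at the parameter `p` preserve the cube, and their compositions along words of
length `n` contract Euclidean distances in it by `M * κ ^ n`, with `κ < 1`. -/
structure UniformlyContracting (f : E d → (ℕ → A) → E N → E N) (p : E d) (M κ : ℝ) : Prop where
  nonneg : 0 ≤ M
  rate_mem : κ ∈ Ioo (0 : ℝ) 1
  mapsTo : ∀ 𝔞, MapsTo (f p 𝔞) (cube N) (cube N)
  norm_psi_sub_le : ∀ (w : List A) (𝔞 : ℕ → A), ∀ x ∈ cube N, ∀ y ∈ cube N,
    ‖psi f p w 𝔞 x - psi f p w 𝔞 y‖ ≤ M * κ ^ w.length * ‖x - y‖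

theorem UniformlyContracting.of_norm_map_sub_le {F : Type*} [NormedAddCommGroup F]
    [NormedSpace ℝ F] (T : E N ≃L[ℝ] F) (hκ : κ ∈ Ioo (0 : ℝ) 1)
    (hf : ∀ 𝔞, MapsTo (f p 𝔞) (cube N) (cube N))
    (hcontr : ∀ 𝔞, ∀ x ∈ cube N, ∀ y ∈ cube N,
      ‖T (f p 𝔞 x - f p 𝔞 y)‖ ≤ κ * ‖T (x - y)‖) :
    UniformlyContracting f p (‖(T.symm : F →L[ℝ] E N)‖ * ‖(T : E N →L[ℝ] F)‖) κ where
  nonneg := by positivity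
  rate_mem := hκ
  mapsTo := hf
  norm_psi_sub_le w 𝔞 x hx y hy := by
    have hκ0 : 0 ≤ κ := hκ.1.le
    calc ‖psi f p w 𝔞 x - psi f p w 𝔞 y‖
        ≤ ‖(T.symm : F →L[ℝ] E N)‖ * ‖T (psi f p w 𝔞 x - psi f p w 𝔞 y)‖ := by
          simpa using (T.symm : F →L[ℝ] E N).le_opNorm (T (psi f p w 𝔞 x - psi f p w 𝔞 y))
      _ ≤ ‖(T.symm : F →L[ℝ] E N)‖ *
            (κ ^ w.length * (‖(T : E N →L[ℝ] F)‖ * ‖x - y‖)) := by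
          gcongr
          exact (norm_map_psi_sub_le (T : E N →L[ℝ] F) hκ0 hf hcontr w 𝔞 hx hy).trans
            (mul_le_mul_of_nonneg_left ((T : E N →L[ℝ] F).le_opNorm _) (pow_nonneg hκ0 _))
      _ = _ := by ring

namespace UniformlyContracting

/- The word is extended at its far end, the innermost map, so that each new letter is seen through
the contraction of the whole preceding word and the errors form a geometric series. -/
theorem norm_psi_sub_psi_le_sum (h : UniformlyContracting f p M κ)
    (hδ : ∀ 𝔞 𝔟 : ℕ → A, (∀ i < q, 𝔞 i = 𝔟 i) → ∀ x ∈ cube N, ‖f p 𝔞 x - f p 𝔟 x‖ ≤ δ)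
    {𝔞 𝔟 : ℕ → A} (h𝔞 : ∀ i < q, 𝔞 i = 𝔟 i) (w : List A) {x : E N} (hx : x ∈ cube N) :
    ‖psi f p w 𝔞 x - psi f p w 𝔟 x‖ ≤ M * δ * ∑ k ∈ Finset.range w.length, κ ^ k := by
  have hM := h.nonneg
  have hκ := h.rate_mem.1.le
  induction w using List.reverseRecOn generalizing x with
  | nil => simp [psi]
  | append_singleton w a ih =>
    rw [psi_append_singleton, psi_append_singleton, List.length_append, List.length_singleton,
      Finset.sum_range_succ, mul_add, add_comm]
    set 𝔠 := consF a (app w 𝔞)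
    set 𝔡 := consF a (app w 𝔟)
    have h𝔠 : ∀ i < q, 𝔠 i = 𝔡 i := fun i hi =>
      consF_agree (app_agree w h𝔞) i (hi.trans (Nat.lt_succ_self q))
    have hcontr : ‖psi f p w 𝔞 (f p 𝔠 x) - psi f p w 𝔞 (f p 𝔡 x)‖ ≤ M * δ * κ ^ w.length :=
      calc _ ≤ M * κ ^ w.length * ‖f p 𝔠 x - f p 𝔡 x‖ :=
            h.norm_psi_sub_le w 𝔞 _ (h.mapsTo 𝔠 hx) _ (h.mapsTo 𝔡 hx)
        _ ≤ M * κ ^ w.length * δ := by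
            gcongr
            exact hδ 𝔠 𝔡 h𝔠 x hx
        _ = M * δ * κ ^ w.length := by ring
    exact (norm_sub_le_norm_sub_add_norm_sub _ _ _).trans
      (add_le_add hcontr (ih (h.mapsTo 𝔡 hx)))

theorem norm_psi_sub_psi_le (h : UniformlyContracting f p M κ)
    (hδ : ∀ 𝔞 𝔟 : ℕ → A, (∀ i < q, 𝔞 i = 𝔟 i) → ∀ x ∈ cube N, ‖f p 𝔞 x - f p 𝔟 x‖ ≤ δ)
    {𝔞 𝔟 : ℕ → A} (h𝔞 : ∀ i < q, 𝔞 i = 𝔟 i) (w : List A) {x : E N} (hx : x ∈ cube N) :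
    ‖psi f p w 𝔞 x - psi f p w 𝔟 x‖ ≤ M * δ / (1 - κ) := by
  have hδ0 : 0 ≤ δ := (norm_nonneg _).trans (hδ 𝔞 𝔟 h𝔞 x hx)
  have hsum : ∑ k ∈ Finset.range w.length, κ ^ k ≤ 1 / (1 - κ) := by
    simpa using geom_sum_Ico_le_of_lt_one (m := 0) (n := w.length) h.rate_mem.1.le h.rate_mem.2
  rw [← mul_one_div]
  exact (h.norm_psi_sub_psi_le_sum hδ h𝔞 w hx).trans
    (mul_le_mul_of_nonneg_left hsum (mul_nonneg h.nonneg hδ0))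

theorem exists_dist_psi_trunc_succ_le (h : UniformlyContracting f p M κ) :
    ∃ R : ℝ, ∀ (𝔞 α : ℕ → A) (n : ℕ),
      dist (psi f p (trunc α n) 𝔞 0) (psi f p (trunc α (n + 1)) 𝔞 0) ≤ R * κ ^ n := by
  obtain ⟨R, hR⟩ := isCompact_cube (N := N).isBounded.exists_norm_le
  refine ⟨M * R, fun 𝔞 α n => ?_⟩
  have hM := h.nonneg
  have hκ := h.rate_mem.1.le
  have hmem : f p (consF (α n) (app (trunc α n) 𝔞)) 0 ∈ cube N := h.mapsTo _ zero_mem_cube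
  rw [trunc_succ, psi_append_singleton, dist_eq_norm]
  calc _ ≤ M * κ ^ n * ‖0 - f p (consF (α n) (app (trunc α n) 𝔞)) 0‖ := by
        simpa only [length_trunc] using h.norm_psi_sub_le (trunc α n) 𝔞 0 zero_mem_cube _ hmem
    _ ≤ M * κ ^ n * R := by
        gcongr
        rw [zero_sub, norm_neg]
        exact hR _ hmem
    _ = M * R * κ ^ n := by ring

theorem tendsto_piProj (h : UniformlyContracting f p M κ) (𝔞 α : ℕ → A) :
    Tendsto (fun n => psi f p (trunc α n) 𝔞 0) atTop (𝓝 (piProj f p 𝔞 α)) := by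
  obtain ⟨R, hR⟩ := h.exists_dist_psi_trunc_succ_le
  exact (cauchySeq_of_le_geometric κ R h.rate_mem.2 (hR 𝔞 α)).tendsto_limUnder

theorem piProj_mem_cube (h : UniformlyContracting f p M κ) (𝔞 α : ℕ → A) :
    piProj f p 𝔞 α ∈ cube N :=
  isCompact_cube.isClosed.mem_of_tendsto (h.tendsto_piProj 𝔞 α)
    (Eventually.of_forall fun n => psi_mapsTo h.mapsTo (trunc α n) 𝔞 zero_mem_cube)

theorem exists_dist_psi_trunc_piProj_le (h : UniformlyContracting f p M κ) :
    ∃ R : ℝ, ∀ (𝔞 α : ℕ → A) (n : ℕ),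
      dist (psi f p (trunc α n) 𝔞 0) (piProj f p 𝔞 α) ≤ R * κ ^ n := by
  obtain ⟨R, hR⟩ := h.exists_dist_psi_trunc_succ_le
  refine ⟨R / (1 - κ), fun 𝔞 α n => ?_⟩
  rw [div_mul_eq_mul_div]
  exact dist_le_of_le_geometric_of_tendsto κ R h.rate_mem.2 (hR 𝔞 α) (h.tendsto_piProj 𝔞 α) n

theorem symbolicHolder_piProj (h : UniformlyContracting f p M κ) {C θ : ℝ}
    (hθ : θ ∈ Ioo (0 : ℝ) 1)
    (hbase : ∀ (𝔞 𝔟 : ℕ → A) (q : ℕ), (∀ i < q, 𝔞 i = 𝔟 i) →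
      ∀ x ∈ cube N, ‖f p 𝔞 x - f p 𝔟 x‖ ≤ C * θ ^ q) :
    SymbolicHolder (piProj f p) := by
  obtain ⟨R, hR⟩ := h.exists_dist_psi_trunc_piProj_le
  refine .of_dist_le_add (C₁ := 2 * R) (C₂ := M * C / (1 - κ)) h.rate_mem hθ
    fun 𝔞 𝔟 α β n h𝔞 hα => ?_
  have hpsi : dist (psi f p (trunc α n) 𝔞 0) (psi f p (trunc β n) 𝔟 0) ≤
      M * (C * θ ^ n) / (1 - κ) := by
    rw [← trunc_congr hα, dist_eq_norm]
    exact h.norm_psi_sub_psi_le (fun 𝔞 𝔟 => hbase 𝔞 𝔟 n) h𝔞 _ zero_mem_cube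
  calc dist (piProj f p 𝔞 α) (piProj f p 𝔟 β)
      ≤ dist (piProj f p 𝔞 α) (psi f p (trunc α n) 𝔞 0) +
          dist (psi f p (trunc α n) 𝔞 0) (psi f p (trunc β n) 𝔟 0) +
          dist (psi f p (trunc β n) 𝔟 0) (piProj f p 𝔟 β) := dist_triangle4 _ _ _ _
    _ ≤ R * κ ^ n + M * (C * θ ^ n) / (1 - κ) + R * κ ^ n := by
        rw [dist_comm (piProj f p 𝔞 α)]
        gcongr
        exacts [hR 𝔞 α n, hR 𝔟 β n]
    _ = 2 * R * κ ^ n + M * C / (1 - κ) * θ ^ n := by ring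

end UniformlyContracting

end Contraction

section UniformBounds

variable {A : Type}

theorem exists_norm_le_of_cylinder [Finite A] {Y F : Type*} [TopologicalSpace Y]
    [SeminormedAddCommGroup F] {s : Set Y} (hs : IsCompact s) {g : (ℕ → A) → Y → F}
    (hg : ∀ 𝔞, ContinuousOn (g 𝔞) s)
    (hvar : ∀ 𝔞, ∃ (q : ℕ) (C : ℝ), ∀ 𝔟, (∀ i < q, 𝔞 i = 𝔟 i) →
      ∀ x ∈ s, ‖g 𝔞 x - g 𝔟 x‖ ≤ C) :
    ∃ K : ℝ, ∀ 𝔞, ∀ x ∈ s, ‖g 𝔞 x‖ ≤ K := by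
  let _ : TopologicalSpace A := ⊥
  have : DiscreteTopology A := ⟨rfl⟩
  choose q C hC using hvar
  choose B hB using fun 𝔞 => hs.exists_bound_of_continuousOn (hg 𝔞)
  obtain ⟨t, ht⟩ := CompactSpace.elim_nhds_subcover (fun 𝔞 => PiNat.cylinder 𝔞 (q 𝔞)) fun 𝔞 =>
    (PiNat.isOpen_cylinder (fun _ => A) 𝔞 (q 𝔞)).mem_nhds (PiNat.self_mem_cylinder 𝔞 (q 𝔞))
  obtain ⟨K, hK⟩ := (t.image fun 𝔞 => B 𝔞 + C 𝔞).exists_le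
  refine ⟨K, fun 𝔟 x hx => ?_⟩
  obtain ⟨𝔞, h𝔞t, h𝔟⟩ : ∃ 𝔞 ∈ t, 𝔟 ∈ PiNat.cylinder 𝔞 (q 𝔞) := by
    simpa using ht.ge (mem_univ 𝔟)
  calc ‖g 𝔟 x‖ ≤ ‖g 𝔞 x‖ + ‖g 𝔞 x - g 𝔟 x‖ := norm_le_norm_add_norm_sub _ _
    _ ≤ B 𝔞 + C 𝔞 := add_le_add (hB 𝔞 x hx) (hC 𝔞 𝔟 (fun i hi => (h𝔟 i hi).symm) x hx)
    _ ≤ K := hK _ (Finset.mem_image_of_mem _ h𝔞t)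

end UniformBounds

namespace SkewFamily

variable {A : Type} {N d : ℕ} {r : ℕ∞} (S : SkewFamily A N d r) {p : E d}

theorem mapsTo_cube (hp : p ∈ S.P') (𝔞 : ℕ → A) : MapsTo (S.f p 𝔞) (cube N) (cube N) :=
  fun x hx => S.into 𝔞 p hp ⟨x, S.X_subset hx, rfl⟩

theorem contDiffOn_fibre (hp : p ∈ S.P') (𝔞 : ℕ → A) : ContDiffOn ℝ r (S.f p 𝔞) S.X' :=
  (S.smooth 𝔞).comp (contDiff_const.prodMk contDiff_id).contDiffOn fun _ hx => ⟨hp, hx⟩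

theorem contDiffAt_fibre (hp : p ∈ S.P') (𝔞 : ℕ → A) {x : E N} (hx : x ∈ cube N) :
    ContDiffAt ℝ r (S.f p 𝔞) x :=
  (S.contDiffOn_fibre hp 𝔞).contDiffAt (S.X'_open.mem_nhds (S.X_subset hx))

theorem exists_norm_fderiv_le [Finite A] (hr : 1 ≤ r) (hp : p ∈ S.P') :
    ∃ K : ℝ, ∀ 𝔞, ∀ x ∈ cube N, ‖fderiv ℝ (S.f p 𝔞) x‖ ≤ K := by
  obtain ⟨C, -, θ, -, hC⟩ := S.holder1
  refine exists_norm_le_of_cylinder isCompact_cube (fun 𝔞 => ?_) fun 𝔞 =>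
    ⟨0, C * θ ^ 0, fun 𝔟 h𝔟 x hx => hC p hp 𝔞 𝔟 0 h𝔟 x (S.X_subset hx)⟩
  exact ((S.contDiffOn_fibre hp 𝔞).continuousOn_fderiv_of_isOpen S.X'_open
    (by exact_mod_cast hr)).mono S.X_subset

theorem exists_norm_iteratedFDeriv_two_le [Finite A] (hr : 2 ≤ r) (hp : p ∈ S.P') :
    ∃ K : ℝ, ∀ 𝔞, ∀ x ∈ cube N, ‖iteratedFDeriv ℝ 2 (S.f p 𝔞) x‖ ≤ K := by
  refine exists_norm_le_of_cylinder isCompact_cube (fun 𝔞 x hx => ?_) fun 𝔞 => ?_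
  · exact ((S.contDiffAt_fibre hp 𝔞 hx).continuousAt_iteratedFDeriv
      (WithTop.coe_le_coe.2 hr)).continuousWithinAt
  · obtain ⟨q, hq⟩ := S.cont2 p hp 𝔞 1 one_pos
    exact ⟨q, 1, fun 𝔟 h𝔟 x hx => hq 𝔟 h𝔟 x (S.X_subset hx)⟩

theorem exists_dist_fderiv_le [Finite A] (hr : 2 ≤ r) (hp : p ∈ S.P') :
    ∃ K : ℝ, ∀ 𝔞, ∀ x ∈ cube N, ∀ y ∈ cube N,
      dist (fderiv ℝ (S.f p 𝔞) x) (fderiv ℝ (S.f p 𝔞) y) ≤ K * dist x y := by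
  obtain ⟨K, hK⟩ := S.exists_norm_iteratedFDeriv_two_le hr hp
  refine ⟨K, fun 𝔞 x hx y hy => ?_⟩
  rw [dist_eq_norm, dist_eq_norm]
  refine convex_cube.norm_image_sub_le_of_norm_fderiv_le (𝕜 := ℝ) (fun z hz => ?_)
    (fun z hz => ?_) hy hx
  · exact ((S.contDiffAt_fibre hp 𝔞 hz).fderiv_right (m := 1)
      (by rw [one_add_one_eq_two]; exact WithTop.coe_le_coe.2 hr)).differentiableAt one_ne_zero
  · rw [← norm_iteratedFDeriv_one, norm_iteratedFDeriv_fderiv]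
    exact hK 𝔞 z hz

theorem exists_uniformlyContracting [Finite A] (hN : 0 < N) (hr : 1 ≤ r)
    (hU : UnipOn hN S.f S.P' S.X') (hp : p ∈ S.P') {γ : ℝ} (hγ : γ ∈ Ico (0 : ℝ) 1)
    (hlt : ∀ 𝔞, ∀ x ∈ cube N, |dentry (S.f p 𝔞) x ⟨0, hN⟩ ⟨0, hN⟩| ≤ γ) :
    ∃ M κ : ℝ, UniformlyContracting S.f p M κ := by
  obtain ⟨K, hK⟩ := S.exists_norm_fderiv_le hr hp
  obtain ⟨κ, hγκ, hκ⟩ := exists_between hγ.2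
  obtain ⟨T, hT⟩ := exists_equiv_norm_apply_le_of_lowerTriangular (N := N) hγ.1 hγκ K
  refine ⟨_, κ, .of_norm_map_sub_le T ⟨hγ.1.trans_lt hγκ, hκ⟩ (S.mapsTo_cube hp)
    fun 𝔞 x hx y hy => ?_⟩
  refine norm_map_sub_le_of_norm_map_fderiv_le (T : E N →L[ℝ] Fin N → ℝ) convex_cube
    (fun z hz => ?_) (fun z hz => ?_) hx hy
  · exact (S.contDiffAt_fibre hp 𝔞 hz).differentiableAt
      (by exact_mod_cast (one_pos.trans_le hr).ne')
  · obtain ⟨hlow, hdiag, -⟩ := hU p hp 𝔞 z (S.X_subset hz)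
    exact hT _ (hK 𝔞 z hz) hlow fun i =>
      (congrArg abs (hdiag i ⟨0, hN⟩)).trans_le (hlt 𝔞 z hz)

theorem symbolicHolder_fderiv_piProj [Finite A] (hr : 2 ≤ r) (hp : p ∈ S.P') {M κ : ℝ}
    (h : UniformlyContracting S.f p M κ) :
    SymbolicHolder fun 𝔞 α => fderiv ℝ (S.f p 𝔞) (piProj S.f p 𝔞 α) := by
  obtain ⟨C₀, -, θ₀, hθ₀, hC₀⟩ := S.holder0
  obtain ⟨C₁, -, θ₁, hθ₁, hC₁⟩ := S.holder1
  obtain ⟨K, hK⟩ := S.exists_dist_fderiv_le hr hp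
  obtain ⟨C, -, θ, hθ, hC⟩ := h.symbolicHolder_piProj hθ₀
    fun 𝔞 𝔟 q h𝔞 x hx => hC₀ p hp 𝔞 𝔟 q h𝔞 x (S.X_subset hx)
  refine .of_dist_le_add (C₁ := |K| * C) (C₂ := C₁) hθ hθ₁ fun 𝔞 𝔟 α β n h𝔞 hα => ?_
  have hx := h.piProj_mem_cube 𝔞 α
  have hy := h.piProj_mem_cube 𝔟 β
  set x := piProj S.f p 𝔞 α
  set y := piProj S.f p 𝔟 β
  calc dist (fderiv ℝ (S.f p 𝔞) x) (fderiv ℝ (S.f p 𝔟) y)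
      ≤ dist (fderiv ℝ (S.f p 𝔞) x) (fderiv ℝ (S.f p 𝔞) y) +
          dist (fderiv ℝ (S.f p 𝔞) y) (fderiv ℝ (S.f p 𝔟) y) := dist_triangle _ _ _
    _ ≤ |K| * (C * θ ^ n) + C₁ * θ₁ ^ n := by
        refine add_le_add ((hK 𝔞 x hx y hy).trans ?_) ?_
        · exact mul_le_mul (le_abs_self K) (hC 𝔞 𝔟 α β n h𝔞 hα) dist_nonneg (abs_nonneg K)
        · rw [dist_eq_norm]
          exact hC₁ p hp 𝔞 𝔟 n h𝔞 y (S.X_subset hy)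
    _ = |K| * C * θ ^ n + C₁ * θ₁ ^ n := by ring

end SkewFamily

section Potential

variable {A : Type} {N d : ℕ} {r : ℕ∞}

theorem abs_log_sub_log_le {c a b : ℝ} (hc : 0 < c) (ha : c ≤ a) (hb : c ≤ b) :
    |Real.log a - Real.log b| ≤ c⁻¹ * |a - b| := by
  refine (convex_Ici c).norm_image_sub_le_of_norm_deriv_le (f := Real.log) (fun x hx => ?_)
    (fun x hx => ?_) hb ha
  · exact Real.differentiableAt_log (hc.trans_le hx).ne'
  · rw [Real.deriv_log, Real.norm_of_nonneg (inv_nonneg.2 (hc.le.trans hx))]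
    exact inv_anti₀ hc hx

theorem GammaBounds.abs_dentry_mem_Ioo {hN : 0 < N} {f : E d → (ℕ → A) → E N → E N} {γ' γ : ℝ}
    (hγ : GammaBounds hN f γ' γ) {p : E d} (hp : p ∈ closure (cubeO d)) (𝔞 : ℕ → A) {x : E N}
    (hx : x ∈ cube N) : |dentry (f p 𝔞) x ⟨0, hN⟩ ⟨0, hN⟩| ∈ Ioo γ' γ := by
  rw [← consF_zero_tail 𝔞]
  exact hγ.2.2.2 p hp _ (𝔞 0) x hx

theorem symbolicHolder_mul_log_abs_dentry [Finite A] (hN : 0 < N) (hr : 2 ≤ r)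
    (S : SkewFamily A N d r) (hU : UnipOn hN S.f S.P' S.X') {γ' γ : ℝ}
    (hγ : GammaBounds hN S.f γ' γ) {p : E d} (hp : p ∈ closure (cubeO d)) (s : ℝ) :
    SymbolicHolder fun 𝔞 α =>
      s * Real.log |dentry (S.f p 𝔞) (piProj S.f p 𝔞 α) ⟨0, hN⟩ ⟨0, hN⟩| := by
  have hp' : p ∈ S.P' := S.P_subset hp
  have hγ'0 : 0 < γ' := hγ.1
  obtain ⟨M, κ, hcontr⟩ := S.exists_uniformlyContracting hN (one_le_two.trans hr) hU hp'
    ⟨(hγ'0.trans hγ.2.1).le, hγ.2.2.1⟩ fun 𝔞 x hx => (hγ.abs_dentry_mem_Ioo hp 𝔞 hx).2.le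
  refine (S.symbolicHolder_fderiv_piProj hr hp' hcontr).of_dist_le_mul (K := |s| * γ'⁻¹)
    fun 𝔞 𝔟 α β => ?_
  have hx := (hγ.abs_dentry_mem_Ioo hp 𝔞 (hcontr.piProj_mem_cube 𝔞 α)).1.le
  have hy := (hγ.abs_dentry_mem_Ioo hp 𝔟 (hcontr.piProj_mem_cube 𝔟 β)).1.le
  rw [Real.dist_eq, ← mul_sub, abs_mul, mul_assoc, dist_eq_norm]
  refine mul_le_mul_of_nonneg_left ((abs_log_sub_log_le hγ'0 hx hy).trans ?_) (abs_nonneg s)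
  gcongr
  exact (abs_abs_sub_abs_le _ _).trans (abs_apply_single_le
    (fderiv ℝ (S.f p 𝔞) (piProj S.f p 𝔞 α) - fderiv ℝ (S.f p 𝔟) (piProj S.f p 𝔟 β)) _ _)

theorem consF_agree_pred {α 𝔞 β 𝔟 : ℕ → A} {q : ℕ} (h𝔞 : ∀ i, i < q → 𝔞 i = 𝔟 i)
    (hα : ∀ i, i + 1 < q → α i = β i) : ∀ i < q - 1, consF (α 0) 𝔞 i = consF (β 0) 𝔟 i := by
  rintro (_ | i) hi
  · exact hα 0 (by lia)
  · exact h𝔞 i (by lia)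

theorem lemma_hol_general [Finite A] (hN : 0 < N) (hr : 2 ≤ r) (S : SkewFamily A N d r)
    (hU : UnipOn hN S.f S.P' S.X') (γ' γ : ℝ) (hγ : GammaBounds hN S.f γ' γ)
    (p₀ : E d) (hp₀ : p₀ ∈ closure (cubeO d)) (s : ℝ) :
    ∃ C > (0 : ℝ), ∃ θ ∈ Ioo (0 : ℝ) 1, ∀ (α 𝔞 β 𝔟 : ℕ → A) (q : ℕ),
      (∀ i : ℕ, i < q → 𝔞 i = 𝔟 i) → (∀ i : ℕ, i + 1 < q → α i = β i) →
      |s * Real.log (lam hN S.f p₀ 𝔞 [α 0]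
          (piProj S.f p₀ (consF (α 0) 𝔞) fun i => α (i + 1))) -
        s * Real.log (lam hN S.f p₀ 𝔟 [β 0]
          (piProj S.f p₀ (consF (β 0) 𝔟) fun i => β (i + 1)))| ≤ C * θ ^ q := by
  obtain ⟨C, hC, θ, ⟨hθ0, hθ1⟩, hlog⟩ := symbolicHolder_mul_log_abs_dentry hN hr S hU hγ hp₀ s
  refine ⟨C / θ ^ 2, by positivity, θ, ⟨hθ0, hθ1⟩, fun α 𝔞 β 𝔟 q h𝔞 hα => ?_⟩
  -- Moving `α 0` to the forward sequence leaves `q - 2` common digits on the backward side; for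
  -- `q < 2` this truncates to `0` and the estimate is the uniform bound.
  calc _ ≤ C * θ ^ (q - 2) :=
        hlog (consF (α 0) 𝔞) (consF (β 0) 𝔟) (fun i => α (i + 1)) (fun i => β (i + 1)) (q - 2)
          (fun i hi => consF_agree_pred h𝔞 hα i (by lia)) fun i hi => hα (i + 1) (by lia)
    _ = C / θ ^ 2 * θ ^ (q - 2 + 2) := by
        rw [pow_add]
        field_simp
    _ ≤ C / θ ^ 2 * θ ^ q := by
        gcongr ?_ * ?_
        exact pow_le_pow_of_le_one hθ0.le hθ1.le (by lia)

end Potential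

/-- Lemma: the potential defining the Gibbs measure is Hölder with positive exponent. -/
theorem lemma_hol {A : Type} [Fintype A] {N d : ℕ} {r : ℕ∞}
    (hA : 2 ≤ Fintype.card A) (hN : 0 < N) (hd : 0 < d) (hr : 2 ≤ r)
    (S : SkewFamily A N d r)
    (hU : UnipOn hN S.f S.P' S.X')
    (γ' γ : ℝ) (hγ : GammaBounds hN S.f γ' γ)
    (p₀ : E d) (hp₀ : p₀ ∈ closure (cubeO d))
    (Δp₀ : ℝ) (hΔ0 : 0 ≤ Δp₀)
    (hΔ : ∀ 𝔟 : ℕ → A, pressure S.f p₀ 𝔟 Δp₀ = 0) :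
    ∃ C > (0:ℝ), ∃ θ ∈ Set.Ioo (0:ℝ) 1, ∀ (α 𝔞 β 𝔟 : ℕ → A) (q : ℕ),
      (∀ i : ℕ, i < q → 𝔞 i = 𝔟 i) → (∀ i : ℕ, i + 1 < q → α i = β i) →
      |Δp₀ * Real.log (lam hN S.f p₀ 𝔞 [α 0]
          (piProj S.f p₀ (consF (α 0) 𝔞) fun i => α (i + 1))) -
        Δp₀ * Real.log (lam hN S.f p₀ 𝔟 [β 0]
          (piProj S.f p₀ (consF (β 0) 𝔟) fun i => β (i + 1)))| ≤ C * θ ^ q :=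
  lemma_hol_general hN hr S hU γ' γ hγ p₀ hp₀ Δp₀

end Paper
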